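/- arXiv:1509.07349 — 2 statements merged into one kernel-verified Lean document; each statement's English description precedes it below -/
import Mathlib

section
/- In the atomic charging game with utility u_i(s) = -g_i(Σ_{t=s_i}^{s_i+C_i-1} f(L_t(s))) where each g_i : ℝ → ℝ is strictly increasing, the function Φ(s) = -Σ_{t∈T} Σ_{v=0}^{n_t(s)} f(L_t^exo + P·v) is an ordinal potential: for every player i, every s_{-i}, and every pair of actions s_i, s_i', one has u_i(s_i, s_{-i}) - u_i(s_i', s_{-i}) > 0 if and only if Φ(s_i, s_{-i}) - Φ(s_i', s_{-i}) > 0. -/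
/-!
The game is a congestion game whose resources are the time slots, played through the increasing
transformations `g i`. Withdrawing player `i` lowers the congestion by one on exactly the slots it
uses, so Rosenthal's potential loses precisely the last summand at each of those slots, and together
these are the cost of player `i`. What remains does not depend on the action of `i`, so a deviation
changes the potential and the cost of `i` by the same amount; a strictly increasing `g i` preserves
the sign of that change.
-/

/-- Number of EVs charging at time `t` under profile `s`. -/
def nActive (I : ℕ) (C : Fin I → ℕ) (s : Fin I → ℤ) (t : ℤ) : ℕ :=
  (Finset.univ.filter (fun i : Fin I => s i ≤ t ∧ t ≤ s i + (C i : ℤ) - 1)).card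

/-- Total load at time `t`. -/
noncomputable def load (I : ℕ) (C : Fin I → ℕ) (Lexo : ℤ → ℝ) (P : ℝ)
    (s : Fin I → ℤ) (t : ℤ) : ℝ :=
  Lexo t + P * (nActive I C s t : ℝ)

/-- Utility of player `i`: `u_i(s) = -g_i(Σ_{t=s_i}^{s_i+C_i-1} f(L_t(s)))`. -/
noncomputable def util (I : ℕ) (C : Fin I → ℕ) (Lexo : ℤ → ℝ) (P : ℝ)
    (f : ℝ → ℝ) (g : Fin I → ℝ → ℝ) (i : Fin I) (s : Fin I → ℤ) : ℝ :=
  -g i (∑ t ∈ Finset.Icc (s i) (s i + (C i : ℤ) - 1), f (load I C Lexo P s t))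

/-- Rosenthal-type potential. -/
noncomputable def Phi (T I : ℕ) (C : Fin I → ℕ) (Lexo : ℤ → ℝ) (P : ℝ)
    (f : ℝ → ℝ) (s : Fin I → ℤ) : ℝ :=
  -∑ t ∈ Finset.Icc (1 : ℤ) (T : ℤ),
      ∑ v ∈ Finset.range (nActive I C s t + 1), f (Lexo t + P * (v : ℝ))

section CongestionGame

open Finset Function

variable {ι R M : Type*} [Fintype ι] [DecidableEq R]

/-- The congestion of resource `r` in a congestion game: the number of players whose chosen bundle
contains `r`. A strategy profile assigns to each player the finite set of resources it uses. -/
def congestion (σ : ι → Finset R) (r : R) : ℕ :=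
  #{j | r ∈ σ j}

/-- The cost of player `i` in a congestion game where a resource `r` used by `n` players costs
`c r n` to each of them. -/
def playerCost [AddCommMonoid M] (c : R → ℕ → M) (σ : ι → Finset R) (i : ι) : M :=
  ∑ r ∈ σ i, c r (congestion σ r)

/-- Rosenthal's potential of a congestion game with resource set `E`. The inner sum starts at
`v = 0`, rather than at the customary `v = 1`; this only adds a constant. -/
def rosenthalPotential [AddCommMonoid M] (E : Finset R) (c : R → ℕ → M) (σ : ι → Finset R) : M :=
  ∑ r ∈ E, ∑ v ∈ range (congestion σ r + 1), c r v

variable [DecidableEq ι] {E B : Finset R} {σ : ι → Finset R} {i : ι}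

theorem congestion_eq_congestion_update_empty_add (σ : ι → Finset R) (i : ι) (r : R) :
    congestion σ r = congestion (update σ i ∅) r + if r ∈ σ i then 1 else 0 := by
  have others : ∀ j ∈ univ.erase i, (if r ∈ update σ i ∅ j then 1 else 0) =
      if r ∈ σ j then 1 else 0 := fun j hj ↦ by
    rw [update_of_ne (ne_of_mem_erase hj)]
  simp only [congestion, card_filter]
  rw [← sum_erase_add _ _ (mem_univ i), ← sum_erase_add _ _ (mem_univ i), sum_congr rfl others]
  simp

theorem rosenthalPotential_eq_update_empty_add_playerCost [AddCommMonoid M] (c : R → ℕ → M)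
    (hE : σ i ⊆ E) :
    rosenthalPotential E c σ = rosenthalPotential E c (update σ i ∅) + playerCost c σ i := by
  rw [rosenthalPotential, rosenthalPotential, playerCost, ← inter_eq_right.mpr hE, ← sum_ite_mem,
    ← sum_add_distrib]
  refine sum_congr rfl fun r _ ↦ ?_
  rw [congestion_eq_congestion_update_empty_add σ i r]
  split_ifs
  · exact sum_range_succ _ _
  · simp only [add_zero]

theorem rosenthalPotential_sub_update [AddCommGroup M] (c : R → ℕ → M) (hE : σ i ⊆ E)
    (hB : B ⊆ E) :
    rosenthalPotential E c σ - rosenthalPotential E c (update σ i B) =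
      playerCost c σ i - playerCost c (update σ i B) i := by
  have hB' : update σ i B i ⊆ E := by rwa [update_self]
  rw [rosenthalPotential_eq_update_empty_add_playerCost c hE,
    rosenthalPotential_eq_update_empty_add_playerCost c hB', update_idem, add_sub_add_left_eq_sub]

end CongestionGame

section Charging

open Finset Function

variable {I : ℕ} (C : Fin I → ℕ) (Lexo : ℤ → ℝ) (P : ℝ) (f : ℝ → ℝ) (s : Fin I → ℤ)

/-- The strategy profile of the congestion game on time slots induced by the start times `s`: EV `j`
uses the slots in which it charges. -/
noncomputable def chargingSlots (j : Fin I) : Finset ℤ :=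
  Icc (s j) (s j + (C j : ℤ) - 1)

/-- The congestion cost of time slot `t` when `n` EVs charge in it. -/
noncomputable def slotCost (t : ℤ) (n : ℕ) : ℝ :=
  f (Lexo t + P * n)

theorem chargingSlots_update (i : Fin I) (s' : ℤ) :
    chargingSlots C (update s i s') =
      update (chargingSlots C s) i (Icc s' (s' + (C i : ℤ) - 1)) := by
  ext1 j
  obtain rfl | hj := eq_or_ne j i
  · simp only [chargingSlots, update_self]
  · simp only [chargingSlots, update_of_ne hj]

theorem nActive_eq_congestion (t : ℤ) : nActive I C s t = congestion (chargingSlots C s) t := by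
  simp only [nActive, congestion, chargingSlots, mem_Icc]

theorem util_eq_neg_playerCost (g : Fin I → ℝ → ℝ) (i : Fin I) :
    util I C Lexo P f g i s = -g i (playerCost (slotCost Lexo P f) (chargingSlots C s) i) := by
  simp only [util, load, nActive_eq_congestion, playerCost, slotCost, chargingSlots]

theorem Phi_eq_neg_rosenthalPotential (T : ℕ) :
    Phi T I C Lexo P f s =
      -rosenthalPotential (Icc 1 (T : ℤ)) (slotCost Lexo P f) (chargingSlots C s) := by
  simp only [Phi, nActive_eq_congestion, rosenthalPotential, slotCost]

variable {C s}

theorem Phi_sub_update {T : ℕ} {i : Fin I} {s' : ℤ}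
    (hwin : 1 ≤ s i ∧ s i + (C i : ℤ) - 1 ≤ (T : ℤ))
    (hwin' : 1 ≤ s' ∧ s' + (C i : ℤ) - 1 ≤ (T : ℤ)) :
    Phi T I C Lexo P f s - Phi T I C Lexo P f (update s i s') =
      playerCost (slotCost Lexo P f) (chargingSlots C (update s i s')) i -
        playerCost (slotCost Lexo P f) (chargingSlots C s) i := by
  have hsub : chargingSlots C s i ⊆ Icc 1 (T : ℤ) := Icc_subset_Icc hwin.1 hwin.2
  have hsub' : Icc s' (s' + (C i : ℤ) - 1) ⊆ Icc 1 (T : ℤ) := Icc_subset_Icc hwin'.1 hwin'.2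
  rw [Phi_eq_neg_rosenthalPotential, Phi_eq_neg_rosenthalPotential, chargingSlots_update,
    neg_sub_neg, ← neg_sub, rosenthalPotential_sub_update _ hsub hsub', neg_sub]

end Charging

theorem ordinal_potential_property_general
    {T I : ℕ} {C : Fin I → ℕ} (Lexo : ℤ → ℝ) (P : ℝ) (f : ℝ → ℝ)
    {g : Fin I → ℝ → ℝ} {i : Fin I} (hg : StrictMono (g i)) {s : Fin I → ℤ} {s' : ℤ}
    (hwin : 1 ≤ s i ∧ s i + (C i : ℤ) - 1 ≤ (T : ℤ))
    (hwin' : 1 ≤ s' ∧ s' + (C i : ℤ) - 1 ≤ (T : ℤ)) :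
    0 < util I C Lexo P f g i s - util I C Lexo P f g i (Function.update s i s')
      ↔ 0 < Phi T I C Lexo P f s - Phi T I C Lexo P f (Function.update s i s') := by
  rw [Phi_sub_update Lexo P f hwin hwin', util_eq_neg_playerCost, util_eq_neg_playerCost,
    neg_sub_neg, sub_pos, sub_pos, hg.lt_iff_lt]

/-- `Φ` is an ordinal potential for the atomic charging game: unilateral
deviation improvements of any player's utility have the same sign as the corresponding
change of `Φ`. -/
theorem ordinal_potential_property
    (T I : ℕ) (C : Fin I → ℕ) (hC : ∀ i, 1 ≤ C i)
    (Lexo : ℤ → ℝ) (P : ℝ) (hP : 0 < P) (f : ℝ → ℝ)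
    (g : Fin I → ℝ → ℝ) (hg : ∀ i, StrictMono (g i))
    (i : Fin I) (s : Fin I → ℤ) (s' : ℤ)
    (hwin : ∀ j, 1 ≤ s j ∧ s j + (C j : ℤ) - 1 ≤ (T : ℤ))
    (hwin' : 1 ≤ s' ∧ s' + (C i : ℤ) - 1 ≤ (T : ℤ)) :
    (0 < util I C Lexo P f g i s - util I C Lexo P f g i (Function.update s i s')
      ↔ 0 < Phi T I C Lexo P f s - Phi T I C Lexo P f (Function.update s i s')) :=
  ordinal_potential_property_general Lexo P f (hg i) (hwin i) hwin'
end

section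
/- Efficiency equals one in the symmetric nonatomic charging game: if f is C¹, strictly increasing, and strictly convex, L^exo is convex increasing, and 1 > q·L_{T-1}^exo - Σ_{k=1}^{q} L_{T-1-kC}^exo (with T-C+1 = qC + r, r < C), then the unique Wardrop equilibrium configuration x^NE of the game with cost f minimizes the total grid cost Σ_{t∈T} f(L_t^exo + P·x_t) over all feasible configurations; in particular the ratio (equilibrium total cost)/(minimum total cost) equals 1. -/
/-!
The cost differences `cost (s + 1) - cost s = g (L_{s+C}) - g (L_s)` only depend on how the loads
at distance `C` compare. In terms of the cumulative distribution `F` of the start times,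
`L_{s+C} - L_s` is `P` times `F (s + C) + F (s - C) - 2 F s + (Lᵉˣᵒ_{s+C} - Lᵉˣᵒ_s) / P`, so asking
that `L_s = L_{s+C}` unless `F s ∈ {0, 1}` is a discrete obstacle problem. Its least solution is
monotone because `Lᵉˣᵒ` is convex, and it is then an equilibrium for every nondecreasing cost at
once: for the cost `g` that the vehicles see and for a subgradient of `f`. The latter makes it a
social optimum, and the equilibria for `g` all have the same values `g (L_t)`, by monotonicity of
the associated variational inequality.
-/

namespace Stmt15

/-- Induced charging configuration of a symmetric start-time distribution. -/
noncomputable def config (T C : ℕ) (xt : ℕ → ℝ) : ℕ → ℝ := fun t =>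
  ∑ u ∈ Finset.Icc (max 1 (t + 1 - C)) (min t (T - C + 1)), xt u

/-- The simplex of start-time distributions. -/
def InSimplex (T C : ℕ) (xt : ℕ → ℝ) : Prop :=
  (∀ t, 0 ≤ xt t) ∧ (∀ t, (t < 1 ∨ T - C + 1 < t) → xt t = 0) ∧
  (∑ t ∈ Finset.Icc 1 (T - C + 1), xt t = 1)

/-- Cost of start time `s` with per-slot cost `g`. -/
noncomputable def cost (T C : ℕ) (Lexo : ℕ → ℝ) (P : ℝ) (g : ℝ → ℝ)
    (xt : ℕ → ℝ) (s : ℕ) : ℝ :=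
  ∑ t ∈ Finset.Icc s (s + C - 1), g (Lexo t + P * config T C xt t)

/-- Wardrop equilibrium with per-slot cost `g`. -/
def IsWardrop (T C : ℕ) (Lexo : ℕ → ℝ) (P : ℝ) (g : ℝ → ℝ) (xt : ℕ → ℝ) : Prop :=
  ∀ s ∈ Finset.Icc 1 (T - C + 1), 0 < xt s →
    ∀ s' ∈ Finset.Icc 1 (T - C + 1),
      cost T C Lexo P g xt s ≤ cost T C Lexo P g xt s'

/-- Total grid cost `Σ_t f(L_t^exo + P·x_t)`. -/
noncomputable def totalCost (T C : ℕ) (Lexo : ℕ → ℝ) (P : ℝ) (f : ℝ → ℝ)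
    (xt : ℕ → ℝ) : ℝ :=
  ∑ t ∈ Finset.Icc 1 T, f (Lexo t + P * config T C xt t)

open Finset

section VariationalInequality

variable {T C : ℕ} {Lexo : ℕ → ℝ} {P : ℝ} {f g : ℝ → ℝ} {x y : ℕ → ℝ}

/-- The load `L_t = L_t^exo + P·x_t`, the argument of the per-slot cost in `cost` and
`totalCost`. -/
noncomputable def load (T C : ℕ) (Lexo : ℕ → ℝ) (P : ℝ) (x : ℕ → ℝ) (t : ℕ) : ℝ :=
  Lexo t + P * config T C x t

theorem sum_mul_config (hCT : C ≤ T) (w x : ℕ → ℝ) :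
    ∑ t ∈ Icc 1 T, w t * config T C x t =
      ∑ s ∈ Icc 1 (T - C + 1), x s * ∑ t ∈ Icc s (s + C - 1), w t := by
  simp only [config, mul_sum]
  rw [sum_comm' (t' := Icc 1 (T - C + 1)) (s' := fun s ↦ Icc s (s + C - 1))]
  · simp only [mul_comm]
  · intro t s
    simp only [mem_Icc, max_le_iff, le_min_iff]
    omega

theorem IsWardrop.sum_mul_cost_le (h : IsWardrop T C Lexo P g x) (hx : InSimplex T C x)
    (hy : InSimplex T C y) :
    ∑ s ∈ Icc 1 (T - C + 1), x s * cost T C Lexo P g x s ≤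
      ∑ s ∈ Icc 1 (T - C + 1), y s * cost T C Lexo P g x s := by
  obtain ⟨m, hm, hmin⟩ := exists_min_image (Icc 1 (T - C + 1)) (cost T C Lexo P g x) ⟨1, by simp⟩
  calc ∑ s ∈ Icc 1 (T - C + 1), x s * cost T C Lexo P g x s
    _ ≤ ∑ s ∈ Icc 1 (T - C + 1), x s * cost T C Lexo P g x m := by
      refine sum_le_sum fun s hs ↦ ?_
      rcases (hx.1 s).eq_or_lt with h0 | hpos
      · simp [← h0]
      · exact mul_le_mul_of_nonneg_left (h s hs hpos m hm) hpos.le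
    _ = ∑ s ∈ Icc 1 (T - C + 1), y s * cost T C Lexo P g x m := by
      rw [← sum_mul, ← sum_mul, hx.2.2, hy.2.2]
    _ ≤ ∑ s ∈ Icc 1 (T - C + 1), y s * cost T C Lexo P g x s :=
      sum_le_sum fun s hs ↦ mul_le_mul_of_nonneg_left (hmin s hs) (hy.1 s)

theorem IsWardrop.sum_mul_load_sub_nonneg (h : IsWardrop T C Lexo P g x) (hCT : C ≤ T)
    (hP : 0 ≤ P) (hx : InSimplex T C x) (hy : InSimplex T C y) :
    0 ≤ ∑ t ∈ Icc 1 T, g (load T C Lexo P x t) * (load T C Lexo P y t - load T C Lexo P x t) := by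
  have hcost := h.sum_mul_cost_le hx hy
  simp only [cost, ← sum_mul_config hCT] at hcost
  calc 0
    _ ≤ P * (∑ t ∈ Icc 1 T, g (load T C Lexo P x t) * config T C y t -
        ∑ t ∈ Icc 1 T, g (load T C Lexo P x t) * config T C x t) :=
      mul_nonneg hP (sub_nonneg.2 hcost)
    _ = _ := by
      rw [← sum_sub_distrib, mul_sum]
      refine sum_congr rfl fun t _ ↦ ?_
      simp only [load]
      ring

theorem IsWardrop.apply_load_eq (hwx : IsWardrop T C Lexo P g x) (hwy : IsWardrop T C Lexo P g y)
    (hg : Monotone g) (hCT : C ≤ T) (hP : 0 ≤ P) (hx : InSimplex T C x) (hy : InSimplex T C y)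
    {t : ℕ} (ht : t ∈ Icc 1 T) :
    g (load T C Lexo P x t) = g (load T C Lexo P y t) := by
  set X := load T C Lexo P x
  set Y := load T C Lexo P y
  have hnonneg : ∀ t ∈ Icc 1 T, 0 ≤ (g (X t) - g (Y t)) * (X t - Y t) := fun t _ ↦
    (hg.monovary monotone_id).sub_mul_sub_nonneg (Y t) (X t)
  have hsum : ∑ t ∈ Icc 1 T, (g (X t) - g (Y t)) * (X t - Y t) ≤ 0 := by
    have hvi := add_nonneg (hwx.sum_mul_load_sub_nonneg hCT hP hx hy)
      (hwy.sum_mul_load_sub_nonneg hCT hP hy hx)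
    rw [← sum_add_distrib] at hvi
    rw [← neg_nonneg, ← sum_neg_distrib]
    exact hvi.trans_eq (sum_congr rfl fun t _ ↦ by ring)
  have hzero := (sum_eq_zero_iff_of_nonneg hnonneg).1 (hsum.antisymm (sum_nonneg hnonneg)) t ht
  rcases mul_eq_zero.1 hzero with hgXY | hXY
  · exact sub_eq_zero.1 hgXY
  · exact congrArg g (sub_eq_zero.1 hXY)

theorem IsWardrop.totalCost_le_of_subgradient (h : IsWardrop T C Lexo P g x)
    (hgf : ∀ a b, f a + g a * (b - a) ≤ f b) (hCT : C ≤ T) (hP : 0 ≤ P) (hx : InSimplex T C x)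
    (hy : InSimplex T C y) :
    totalCost T C Lexo P f x ≤ totalCost T C Lexo P f y :=
  calc totalCost T C Lexo P f x
    _ ≤ totalCost T C Lexo P f x + ∑ t ∈ Icc 1 T,
        g (load T C Lexo P x t) * (load T C Lexo P y t - load T C Lexo P x t) :=
      le_add_of_nonneg_right (h.sum_mul_load_sub_nonneg hCT hP hx hy)
    _ = ∑ t ∈ Icc 1 T, (f (load T C Lexo P x t) +
        g (load T C Lexo P x t) * (load T C Lexo P y t - load T C Lexo P x t)) :=
      sum_add_distrib.symm
    _ ≤ totalCost T C Lexo P f y := sum_le_sum fun _ _ ↦ hgf _ _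

end VariationalInequality

theorem add_rightDeriv_mul_sub_le {S : Set ℝ} {f : ℝ → ℝ} {a b : ℝ} (hf : ConvexOn ℝ S f)
    (ha : a ∈ interior S) (hb : b ∈ S) :
    f a + derivWithin f (Set.Ioi a) a * (b - a) ≤ f b := by
  rcases lt_trichotomy a b with hab | rfl | hba
  · have hslope := hf.rightDeriv_le_slope_of_mem_interior ha hb hab
    rw [slope_def_field, le_div_iff₀ (sub_pos.2 hab)] at hslope
    linarith
  · simp
  · have hslope := (hf.slope_le_leftDeriv_of_mem_interior hb ha hba).trans
      (hf.leftDeriv_le_rightDeriv_of_mem_interior ha)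
    rw [slope_def_field, div_le_iff₀ (sub_pos.2 hba)] at hslope
    linarith

section Obstacle

variable {N C : ℕ} {d : ℕ → ℝ}

/-- The operator of the discrete obstacle problem `0 ≤ F ≤ 1`, `F 0 = 0`, `F s = 1` for `s ≥ N`,
with `2 F s = F (s + C) + F (s - C) + d s` wherever no constraint is active. The truncation of
`s - C` is intended: it gives the boundary value `F 0 = 0`. -/
noncomputable def obstacleMap (N C : ℕ) (d : ℕ → ℝ) :
    (ℕ → unitInterval) →o (ℕ → unitInterval) where
  toFun F s :=
    if s = 0 then 0
    else if N ≤ s then 1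
    else Set.projIcc 0 1 zero_le_one ((F (s + C) + F (s - C) + d s) / 2)
  monotone' F G hFG s := by
    have hadd : (F (s + C) : ℝ) ≤ G (s + C) := hFG (s + C)
    have hsub : (F (s - C) : ℝ) ≤ G (s - C) := hFG (s - C)
    dsimp only
    split_ifs
    · exact le_rfl
    · exact le_rfl
    · exact Set.monotone_projIcc _ (by linarith)

theorem obstacleMap_apply (F : ℕ → unitInterval) (s : ℕ) :
    obstacleMap N C d F s =
      if s = 0 then 0
      else if N ≤ s then 1
      else Set.projIcc 0 1 zero_le_one ((F (s + C) + F (s - C) + d s) / 2) :=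
  rfl

/-- The least solution of the discrete obstacle problem of `obstacleMap`. -/
noncomputable def obstacleSol (N C : ℕ) (d : ℕ → ℝ) : ℕ → unitInterval :=
  (obstacleMap N C d).lfp

theorem obstacleMap_obstacleSol : obstacleMap N C d (obstacleSol N C d) = obstacleSol N C d :=
  (obstacleMap N C d).map_lfp

theorem obstacleSol_zero : obstacleSol N C d 0 = 0 := by
  rw [← obstacleMap_obstacleSol, obstacleMap_apply, if_pos rfl]

theorem obstacleSol_of_le {s : ℕ} (hs : 0 < s) (hNs : N ≤ s) : obstacleSol N C d s = 1 := by
  rw [← obstacleMap_obstacleSol, obstacleMap_apply, if_neg hs.ne', if_pos hNs]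

theorem obstacleSol_of_lt {s : ℕ} (hs : 0 < s) (hsN : s < N) :
    obstacleSol N C d s = Set.projIcc (0 : ℝ) 1 zero_le_one
      ((obstacleSol N C d (s + C) + obstacleSol N C d (s - C) + d s) / 2) := by
  conv_lhs => rw [← obstacleMap_obstacleSol, obstacleMap_apply, if_neg hs.ne', if_neg hsN.not_ge]

theorem obstacleMap_apply_le_of_forall_le (hd : Monotone d) {F G : ℕ → unitInterval}
    (h : ∀ s u, s ≤ u → G s ≤ F u) {s u : ℕ} (hsu : s ≤ u) :
    obstacleMap N C d G s ≤ obstacleMap N C d F u := by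
  have hadd : (G (s + C) : ℝ) ≤ F (u + C) := h _ _ (by omega)
  have hsub : (G (s - C) : ℝ) ≤ F (u - C) := h _ _ (by omega)
  have hdsu := hd hsu
  rw [obstacleMap_apply, obstacleMap_apply]
  split_ifs
  any_goals omega
  · exact le_rfl
  · exact unitInterval.nonneg'
  · exact unitInterval.nonneg'
  · exact le_rfl
  · exact unitInterval.le_one'
  · exact Set.monotone_projIcc _ (by linarith)

theorem obstacleSol_monotone (hd : Monotone d) : Monotone (obstacleSol N C d) := by
  -- The tail infimum of the solution is a supersolution, hence lies above the least solution.
  let G : ℕ → unitInterval := fun s ↦ ⨅ (u) (_ : s ≤ u), obstacleSol N C d u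
  have hG_le (s u : ℕ) (hsu : s ≤ u) : G s ≤ obstacleSol N C d u :=
    iInf₂_le (f := fun u (_ : s ≤ u) ↦ obstacleSol N C d u) u hsu
  have hG : obstacleMap N C d G ≤ G := fun s ↦ le_iInf₂ fun u hsu ↦
    calc obstacleMap N C d G s
      _ ≤ obstacleMap N C d (obstacleSol N C d) u :=
        obstacleMap_apply_le_of_forall_le hd hG_le hsu
      _ = obstacleSol N C d u := congrFun obstacleMap_obstacleSol u
  have hle : obstacleSol N C d ≤ G := (obstacleMap N C d).lfp_le hG
  exact fun s u hsu ↦ (hle s).trans (hG_le s u hsu)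

theorem two_mul_obstacleSol_le {s : ℕ} (hs : 0 < s) (hsN : s < N)
    (hpos : (0 : ℝ) < obstacleSol N C d s) :
    2 * (obstacleSol N C d s : ℝ) ≤
      obstacleSol N C d (s + C) + obstacleSol N C d (s - C) + d s := by
  rw [obstacleSol_of_lt hs hsN, Set.coe_projIcc] at hpos ⊢
  rw [max_eq_right ((lt_max_iff.1 hpos).resolve_left (lt_irrefl 0)).le]
  linarith [min_le_right 1 ((obstacleSol N C d (s + C) + obstacleSol N C d (s - C) + d s) / 2)]

theorem le_two_mul_obstacleSol {s : ℕ} (hs : 0 < s) (hsN : s < N)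
    (hlt : (obstacleSol N C d s : ℝ) < 1) :
    obstacleSol N C d (s + C) + obstacleSol N C d (s - C) + d s ≤
      2 * (obstacleSol N C d s : ℝ) := by
  rw [obstacleSol_of_lt hs hsN, Set.coe_projIcc] at hlt ⊢
  have hmin := (min_lt_iff.1 (max_lt_iff.1 hlt).2).resolve_left (lt_irrefl 1)
  rw [min_eq_right hmin.le]
  linarith [le_max_right 0 ((obstacleSol N C d (s + C) + obstacleSol N C d (s - C) + d s) / 2)]

end Obstacle

section UniversalEquilibrium

variable {T C : ℕ} {Lexo : ℕ → ℝ} {P : ℝ} {g : ℝ → ℝ} {x F : ℕ → ℝ}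

theorem cost_succ_sub_cost {s : ℕ} (hs : 0 < s) :
    cost T C Lexo P g x (s + 1) - cost T C Lexo P g x s =
      g (load T C Lexo P x (s + C)) - g (load T C Lexo P x s) := by
  have hcost {u : ℕ} (hu : 0 < u) :
      cost T C Lexo P g x u = ∑ t ∈ Ico u (u + C), g (load T C Lexo P x t) := by
    rw [cost, ← Ico_add_one_right_eq_Icc, Nat.sub_add_cancel (by omega)]
    rfl
  have htop := sum_Ico_succ_top (Nat.le_add_right s C) fun t ↦ g (load T C Lexo P x t)
  have hbot := sum_eq_sum_Ico_succ_bot (show s < s + C + 1 by omega)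
    fun t ↦ g (load T C Lexo P x t)
  rw [hcost hs, hcost (by omega), add_right_comm]
  linarith

theorem cost_sub_cost {s u : ℕ} (hs : 0 < s) (hsu : s ≤ u) :
    cost T C Lexo P g x u - cost T C Lexo P g x s =
      ∑ i ∈ Ico s u, (g (load T C Lexo P x (i + C)) - g (load T C Lexo P x i)) := by
  rw [← sum_Ico_sub _ hsu]
  exact sum_congr rfl fun i hi ↦ cost_succ_sub_cost (hs.trans_le (mem_Ico.1 hi).1)

/-- `F` is the cumulative distribution function of a start-time distribution on
`{1, …, T - C + 1}`. -/
structure IsStartCDF (T C : ℕ) (F : ℕ → ℝ) : Prop where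
  monotone : Monotone F
  zero : F 0 = 0
  eq_one : ∀ s, T - C + 1 ≤ s → F s = 1

/-- The start-time distribution with cumulative distribution function `F`; its value at `0` is
`0` because `0 - 1 = 0` in `ℕ`. -/
def increment (F : ℕ → ℝ) (s : ℕ) : ℝ := F s - F (s - 1)

theorem sum_increment {a b : ℕ} (hab : a ≤ b) :
    ∑ s ∈ Icc (a + 1) b, increment F s = F b - F a := by
  rw [← sum_Ico_sub _ hab, ← Ico_add_one_right_eq_Icc, ← sum_Ico_add']
  rfl

namespace IsStartCDF

theorem inSimplex (hF : IsStartCDF T C F) : InSimplex T C (increment F) := by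
  refine ⟨fun s ↦ sub_nonneg.2 (hF.monotone (Nat.sub_le _ _)), ?_, ?_⟩
  · rintro s (hs | hs)
    · simp [increment, Nat.lt_one_iff.1 hs]
    · rw [increment, hF.eq_one s hs.le, hF.eq_one (s - 1) (by omega), sub_self]
  · rw [← zero_add 1, sum_increment (Nat.zero_le _), zero_add, hF.eq_one _ le_rfl, hF.zero,
      sub_zero]

theorem config_increment (hF : IsStartCDF T C F) {t : ℕ} (htT : t ≤ T) :
    config T C (increment F) t = F t - F (t - C) := by
  rw [config, show max 1 (t + 1 - C) = t - C + 1 by omega, sum_increment (by omega)]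
  rcases le_total t (T - C + 1) with h | h
  · rw [min_eq_left h]
  · rw [min_eq_right h, hF.eq_one _ le_rfl, hF.eq_one _ h]

theorem load_add_sub_load (hF : IsStartCDF T C F) {s : ℕ} (hsT : s + C ≤ T) :
    load T C Lexo P (increment F) (s + C) - load T C Lexo P (increment F) s =
      Lexo (s + C) - Lexo s + P * (F (s + C) + F (s - C) - 2 * F s) := by
  rw [load, load, hF.config_increment hsT, hF.config_increment (by omega), Nat.add_sub_cancel]
  ring

theorem isWardrop (hF : IsStartCDF T C F) (hg : Monotone g)
    (hle : ∀ s, 0 < s → s < T - C + 1 → 0 < F s →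
      load T C Lexo P (increment F) s ≤ load T C Lexo P (increment F) (s + C))
    (hge : ∀ s, 0 < s → s < T - C + 1 → F s < 1 →
      load T C Lexo P (increment F) (s + C) ≤ load T C Lexo P (increment F) s) :
    IsWardrop T C Lexo P g (increment F) := by
  intro s hs hinc u hu
  rw [mem_Icc] at hs hu
  have hFs : F (s - 1) < F s := sub_pos.1 hinc
  rcases le_total s u with hsu | hus
  · rw [← sub_nonneg, cost_sub_cost hs.1 hsu]
    refine sum_nonneg fun i hi ↦ sub_nonneg.2 (hg ?_)
    rw [mem_Ico] at hi
    refine hle i (by omega) (by omega) ?_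
    calc 0 = F 0 := hF.zero.symm
      _ ≤ F (s - 1) := hF.monotone (Nat.zero_le _)
      _ < F s := hFs
      _ ≤ F i := hF.monotone hi.1
  · rw [← sub_nonpos, cost_sub_cost hu.1 hus]
    refine sum_nonpos fun i hi ↦ sub_nonpos.2 (hg ?_)
    rw [mem_Ico] at hi
    refine hge i (by omega) (by omega) ?_
    calc F i ≤ F (s - 1) := hF.monotone (by omega)
      _ < F s := hFs
      _ ≤ F (T - C + 1) := hF.monotone hs.2
      _ = 1 := hF.eq_one _ le_rfl

end IsStartCDF

theorem isStartCDF_obstacleSol {d : ℕ → ℝ} (hd : Monotone d) :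
    IsStartCDF T C fun s ↦ obstacleSol (T - C + 1) C d s where
  monotone _ _ h := obstacleSol_monotone hd h
  zero := by simp [obstacleSol_zero]
  eq_one s hs := by simp [obstacleSol_of_le (by omega : 0 < s) hs]

theorem monotone_add_sub_of_convex {L : ℕ → ℝ}
    (hL : ∀ t, L (t + 1) - L t ≤ L (t + 2) - L (t + 1)) (C : ℕ) :
    Monotone fun s ↦ L (s + C) - L s := by
  refine monotone_nat_of_le_succ fun s ↦ ?_
  have hslope : Monotone fun t ↦ L (t + 1) - L t := monotone_nat_of_le_succ hL
  have hsC : L (s + 1) - L s ≤ L (s + C + 1) - L (s + C) := hslope (Nat.le_add_right s C)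
  rw [add_right_comm]
  linarith

theorem exists_forall_monotone_isWardrop (hCT : C ≤ T) (hP : 0 < P)
    (hLconv : ∀ t, Lexo (t + 1) - Lexo t ≤ Lexo (t + 2) - Lexo (t + 1)) :
    ∃ x, InSimplex T C x ∧ ∀ g : ℝ → ℝ, Monotone g → IsWardrop T C Lexo P g x := by
  let d : ℕ → ℝ := fun s ↦ (Lexo (s + C) - Lexo s) / P
  have hd : Monotone d := fun _ _ h ↦
    div_le_div_of_nonneg_right (monotone_add_sub_of_convex hLconv C h) hP.le
  have hF : IsStartCDF T C fun s ↦ obstacleSol (T - C + 1) C d s := isStartCDF_obstacleSol hd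
  have hPd (s : ℕ) : P * d s = Lexo (s + C) - Lexo s := mul_div_cancel₀ _ hP.ne'
  refine ⟨_, hF.inSimplex, fun g hg ↦ hF.isWardrop hg (fun s hs hsN hpos ↦ ?_)
    fun s hs hsN hlt ↦ ?_⟩
  · rw [← sub_nonneg, hF.load_add_sub_load (by omega), ← hPd, ← mul_add]
    exact mul_nonneg hP.le (by linarith [two_mul_obstacleSol_le hs hsN hpos])
  · rw [← sub_nonpos, hF.load_add_sub_load (by omega), ← hPd, ← mul_add]
    exact mul_nonpos_of_nonneg_of_nonpos hP.le (by linarith [le_two_mul_obstacleSol hs hsN hlt])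

end UniversalEquilibrium

theorem efficiency_equals_one_general {T C : ℕ} (hCT : C ≤ T) {Lexo : ℕ → ℝ} {P : ℝ} (hP : 0 < P)
    (hLconv : ∀ t, Lexo (t + 1) - Lexo t ≤ Lexo (t + 2) - Lexo (t + 1))
    {f g : ℝ → ℝ} (hf : ConvexOn ℝ Set.univ f) (hg : Monotone g) (hfg : f.FactorsThrough g)
    {x y : ℕ → ℝ} (hx : InSimplex T C x) (hwx : IsWardrop T C Lexo P g x)
    (hy : InSimplex T C y) :
    totalCost T C Lexo P f x ≤ totalCost T C Lexo P f y := by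
  obtain ⟨z, hz, hwz⟩ := exists_forall_monotone_isWardrop hCT hP hLconv
  have hmono : Monotone fun a ↦ derivWithin f (Set.Ioi a) a := by
    simpa only [interior_univ, monotoneOn_univ] using hf.monotoneOn_rightDeriv
  calc totalCost T C Lexo P f x
    _ = totalCost T C Lexo P f z :=
      sum_congr rfl fun t ht ↦ hfg (hwx.apply_load_eq (hwz g hg) hg hCT hP.le hx hz ht)
    _ ≤ totalCost T C Lexo P f y :=
      (hwz _ hmono).totalCost_le_of_subgradient
        (fun a b ↦ add_rightDeriv_mul_sub_le hf (by simp) (Set.mem_univ b)) hCT hP.le hz hy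

/-- efficiency equals one in the symmetric nonatomic charging game: under
the stated assumptions on `f` and `L^exo`, any Wardrop equilibrium `x̃^NE` of the game
with cost `f` minimizes the total grid cost over feasible configurations; in particular
its total cost equals that of any social optimum. -/
theorem efficiency_equals_one
    (T C q r : ℕ) (hC : 1 ≤ C) (hCT : C ≤ T)
    (hdiv : T - C + 1 = q * C + r) (hr : r < C)
    (Lexo : ℕ → ℝ) (P : ℝ) (hP : 0 < P)
    (hLinc : ∀ t, Lexo t ≤ Lexo (t + 1))
    (hLconv : ∀ t, Lexo (t + 1) - Lexo t ≤ Lexo (t + 2) - Lexo (t + 1))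
    (hcond : (1 : ℝ) > q * Lexo (T - 1) - ∑ k ∈ Finset.Icc 1 q, Lexo (T - 1 - k * C))
    (f : ℝ → ℝ) (hC1 : ContDiff ℝ 1 f) (hmono : StrictMono f)
    (hconv : StrictConvexOn ℝ Set.univ f)
    (xtNE : ℕ → ℝ) (hNEfeas : InSimplex T C xtNE)
    (hNE : IsWardrop T C Lexo P f xtNE) :
    (∀ yt, InSimplex T C yt →
      totalCost T C Lexo P f xtNE ≤ totalCost T C Lexo P f yt) ∧
    (∀ yt, InSimplex T C yt →
      (∀ zt, InSimplex T C zt → totalCost T C Lexo P f yt ≤ totalCost T C Lexo P f zt) →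
      totalCost T C Lexo P f xtNE = totalCost T C Lexo P f yt) := by
  have hmin : ∀ yt, InSimplex T C yt → totalCost T C Lexo P f xtNE ≤ totalCost T C Lexo P f yt :=
    fun _ ↦ efficiency_equals_one_general hCT hP hLconv hconv.convexOn hmono.monotone
      (fun _ _ ↦ id) hNEfeas hNE
  exact ⟨hmin, fun yt hy hopt ↦ (hmin yt hy).antisymm (hopt xtNE hNEfeas)⟩

end Stmt15
end
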